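/- Let W = W(A, α, u) be a generalized Weyl algebra with u central and regular in A such that, for some fixed positive integer m, M := Au + Aα^m(u) satisfies: A/M is a simple right Ore domain, and Au + Aα^i(u) = A for all positive integers i ≠ m. Then the ring W/J(M) has right Goldie rank (right uniform dimension) m; in particular, W/J(M) is the internal direct sum of m uniform right ideals. -/

import Mathlib

/-! With `D = A/M`, the quotient `W/J(M)` is the matrix ring `M_m(D)` in disguise, and the
uniform right ideals are its "rows"; only the features of this picture that are needed are
established.

For `ℓ ∈ ℤ` let `p_ℓ : A → D` be `a ↦ α^ℓ(a) + M` (`twistedQuot`), whose kernel is `α^{-ℓ}(M)`.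
The component of `J(M)` in degree `d` is then described uniformly in the sign of `d`: it is the
set of `a` with `p_ℓ(a) = 0` whenever both `ℓ` and `ℓ + d` lie in `[0, m)` (`mem_Jcomp_iff`).
Since `u` and `α^i(u)` are comaximal for `0 < i < m`, the ideals `α^{-ℓ}(M)`, `0 ≤ ℓ < m`, are
pairwise comaximal, so the Chinese remainder theorem yields `e_r ∈ A` with `p_ℓ(e_r) = δ_{ℓr}`
(`exists_crt_idem`). The images `E_r` of the `e_r` form a complete set of orthogonal idempotents of
`W/J(M)`, hence `W/J(M)` is the direct sum of the right ideals `E_r · (W/J(M))`.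

Each of these is uniform: from a nonzero `E_r w`, pick a degree `d` contributing to it.
Multiplying on the right by `E_{r+d}` kills all other degrees, and multiplying then by the
monomial of degree `-d` leads to an element `e_r y` of degree `0`, with `p_r(y) ≠ 0` because
`p_r` of the product of the monomials of degrees `d` and `-d` is a product of classes of
`α^j(u)` with `0 < j < m`, nonzero in the domain `D` (`exists_degree_zero_multiple`).
Two nonzero elements `e_r y`, `e_r y'` of this form have a nonzero common right
multiple since `D` is right Ore. -/

noncomputable section

/-- The "monomial" of degree `i` in a generalized Weyl algebra: `Y^i` for `i ≥ 0`
and `X^(-i)` for `i < 0`. -/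
def gwaMon {W : Type*} [Monoid W] (X Y : W) : ℤ → W :=
  fun i => if 0 ≤ i then Y ^ i.toNat else X ^ (-i).toNat

/-- `W` is a generalized Weyl algebra `W(A, α, u)` with respect to the embedding
`ι : A →+* W` and the elements `X, Y`: the defining relations hold and `W` is free as
a left `A`-module with basis `{X^i : i ≥ 1} ∪ {1} ∪ {Y^i : i ≥ 1}`. -/
structure IsGWA {A W : Type*} [Ring A] [Ring W]
    (α : A ≃+* A) (u : A) (ι : A →+* W) (X Y : W) : Prop where
  central : ∀ a : A, u * a = a * u
  YX : Y * X = ι (α u)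
  XY : X * Y = ι u
  Ya : ∀ a : A, Y * ι a = ι (α a) * Y
  Xa : ∀ a : A, X * ι a = ι (α.symm a) * X
  free : Function.Bijective
    (fun f : ℤ →₀ A => f.sum fun i a => ι a * gwaMon X Y i)

/-- `R` is the conformal ambiskew polynomial ring `R(A, α, u − α(u), 1)` with respect to
the embedding `ι : A →ₐ[K] R` and the elements `x, y`: the defining relations hold and
`R` is free as a left `A`-module with basis `{yⁱxʲ : i, j ≥ 0}`. -/
structure IsAmbiskew {K A R : Type*} [Field K] [Ring A] [Algebra K A] [Ring R] [Algebra K R]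
    (α : A ≃ₐ[K] A) (u : A) (ι : A →ₐ[K] R) (x y : R) : Prop where
  ucentral : ∀ a : A, u * a = a * u
  ya : ∀ a : A, y * ι a = ι (α a) * y
  xa : ∀ a : A, x * ι a = ι (α.symm a) * x
  xy : x * y = y * x + ι (u - α u)
  free : Function.Bijective
    (fun f : ℕ × ℕ →₀ A => f.sum fun p a => ι a * (y ^ p.1 * x ^ p.2))

/-- `S` is the skew Laurent polynomial ring `A[y^{±1}; α]` with respect to the embedding
`ι : A →ₐ[K] S` and the invertible element `Y`: `Y·a = α(a)·Y` and `S` is free as a left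
`A`-module with basis `{Yⁱ : i ∈ ℤ}`. -/
structure IsSkewLaurent {K A S : Type*} [Field K] [Ring A] [Algebra K A] [Ring S] [Algebra K S]
    (α : A ≃ₐ[K] A) (ι : A →ₐ[K] S) (Y : Sˣ) : Prop where
  comm : ∀ a : A, (Y : S) * ι a = ι (α a) * (Y : S)
  free : Function.Bijective
    (fun f : ℤ →₀ A => f.sum fun i a => ι a * ((Y ^ i : Sˣ) : S))

/-- `φ : R →+* C` exhibits `C` as the localization of `R` at the multiplicative set `Z`
of central elements: each element of `Z` is central and becomes a unit, every element of
`C` is a fraction, and the kernel of `φ` is the set of elements annihilated by `Z`. -/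
structure IsCentralLocalization {R C : Type*} [Ring R] [Ring C] (Z : Set R) (φ : R →+* C) : Prop where
  central : ∀ s ∈ Z, ∀ r : R, s * r = r * s
  isUnit : ∀ s ∈ Z, IsUnit (φ s)
  surj : ∀ c : C, ∃ r : R, ∃ s ∈ Z, c * φ s = φ r
  ker : ∀ r : R, φ r = 0 ↔ ∃ s ∈ Z, r * s = 0

/-- A two-sided ideal `P` is prime: it is proper and whenever the product of two two-sided
ideals lies in `P`, one of them lies in `P`. -/
def IsPrimeTwoSided {C : Type*} [Ring C] (P : TwoSidedIdeal C) : Prop :=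
  P ≠ ⊤ ∧ ∀ I J : TwoSidedIdeal C, (∀ a ∈ I, ∀ b ∈ J, a * b ∈ P) → I ≤ P ∨ J ≤ P

/-- A two-sided ideal `M` is maximal: proper and maximal among proper two-sided ideals. -/
def IsMaximalTwoSided {C : Type*} [Ring C] (M : TwoSidedIdeal C) : Prop :=
  M ≠ ⊤ ∧ ∀ T : TwoSidedIdeal C, M < T → T = ⊤

/-- Evaluation of a (commutative) multivariate polynomial over `K` at a family of
(pairwise commuting, central) elements of a possibly noncommutative `K`-algebra. -/
def mvEval {K A : Type*} [CommSemiring K] [Ring A] [Algebra K A] {n : ℕ}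
    (v : Fin n → A) (p : MvPolynomial (Fin n) K) : A :=
  p.support.sum fun d => algebraMap K A (MvPolynomial.coeff d p) *
    ((List.finRange n).map fun i => v i ^ d i).prod

/-- The components of the graded ideal `J(I)` of a generalized Weyl algebra:
`I_i = I_{-i} = A` for `i ≥ m`, `I_i = ∩_{ℓ=0}^{m−1−i} α^{−ℓ}(I)` for `0 ≤ i ≤ m−1`, and
`I_{−i} = ∩_{ℓ=i}^{m−1} α^{−ℓ}(I)` for `0 ≤ i ≤ m−1`. -/
def Jcomp {A : Type*} [Ring A] (α : A ≃+* A) (I : Set A) (m : ℕ) : ℤ → Set A :=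
  fun d => if m ≤ d.natAbs then Set.univ
    else if 0 ≤ d then ⋂ ℓ ∈ Finset.range (m - d.natAbs), (⇑α.symm)^[ℓ] '' I
    else ⋂ ℓ ∈ Finset.Icc d.natAbs (m - 1), (⇑α.symm)^[ℓ] '' I

/-- The subset of a generalized Weyl algebra consisting of all elements whose (unique)
graded components of each degree `d` have coefficients in the prescribed set `comp d`. -/
def gwaGradedSet {A W : Type*} [Ring A] [Ring W] (ι : A →+* W) (X Y : W)
    (comp : ℤ → Set A) : Set W :=
  {w | ∃ f : ℤ →₀ A, (∀ d, f d ∈ comp d) ∧ w = f.sum fun d a => ι a * gwaMon X Y d}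

/-- The set `Au + Aα^m(u)` in `A`. -/
def genSet2 {A : Type*} [Ring A] (x y : A) : Set A :=
  {a : A | ∃ b c : A, a = b * x + c * y}

/-- The product of two sets in a ring, closed under finite sums: for two-sided ideals
this is the usual ideal product. -/
def setMulSum {A : Type*} [Ring A] (S T : Set A) : Set A :=
  {x | ∃ (n : ℕ) (f g : Fin n → A), (∀ i, f i ∈ S ∧ g i ∈ T) ∧ x = ∑ i, f i * g i}

/-- The (right-nested) product of a list of sets in a ring; the empty product is `A`. -/
def listProdSet {A : Type*} [Ring A] (l : List (Set A)) : Set A :=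
  l.foldr setMulSum Set.univ

/-- The element `d_i = α(u)·α²(u)⋯αⁱ(u)`. -/
def dElt {A : Type*} [Ring A] (α : A ≃+* A) (u : A) (i : ℕ) : A :=
  ((List.range i).map fun s => (⇑α)^[s + 1] u).prod

/-- The element `e_i = α^{−i}(d_i) = u·α^{−1}(u)⋯α^{1−i}(u)`. -/
def eElt {A : Type*} [Ring A] (α : A ≃+* A) (u : A) (i : ℕ) : A :=
  (⇑α.symm)^[i] (dElt α u i)

/-- Product of two two-sided ideals. -/
def tsiMul {R : Type*} [Ring R] (I J : TwoSidedIdeal R) : TwoSidedIdeal R :=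
  TwoSidedIdeal.span {x | ∃ a ∈ I, ∃ b ∈ J, x = a * b}

/-- The (right-nested) product of a list of two-sided ideals; the empty product is `R`. -/
def tsiListProd {R : Type*} [Ring R] (l : List (TwoSidedIdeal R)) : TwoSidedIdeal R :=
  l.foldr tsiMul ⊤

/-- A subset of a ring is a right ideal. -/
def IsRightIdealSet {Q : Type*} [Ring Q] (S : Set Q) : Prop :=
  (0 : Q) ∈ S ∧ (∀ a ∈ S, ∀ b ∈ S, a + b ∈ S) ∧ (∀ a ∈ S, -a ∈ S) ∧
    (∀ a ∈ S, ∀ q : Q, a * q ∈ S)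

/-- A right ideal is uniform: it is nonzero and any two nonzero elements generate right
ideals with nonzero intersection (equivalently, any two nonzero submodules intersect
nontrivially). -/
def IsUniformRightIdealSet {Q : Type*} [Ring Q] (S : Set Q) : Prop :=
  (∃ a ∈ S, a ≠ 0) ∧ ∀ a ∈ S, a ≠ 0 → ∀ b ∈ S, b ≠ 0 →
    ∃ q₁ q₂ : Q, a * q₁ = b * q₂ ∧ a * q₁ ≠ 0

/-- The ideal `M = Au + Aα^m(u)` of notation 4.1, as a set. -/
def gwaMset {A : Type*} [Ring A] (α : A ≃+* A) (u : A) (m : ℕ) : Set A :=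
  genSet2 u ((⇑α)^[m] u)

/-- The graded ideal `J(M)` of `W`, as a set. -/
def gwaJM {A W : Type*} [Ring A] [Ring W] (α : A ≃+* A) (u : A) (ι : A →+* W)
    (X Y : W) (m : ℕ) : Set W :=
  gwaGradedSet ι X Y (Jcomp α (gwaMset α u m) m)

/-- The product `Π(M, 0, r̂, m−1) = M₀M₁⋯M_{r−1}M_{r+1}⋯M_{m−1}` of the ideals
`M_i = α^{−i}(M)` omitting the index `r`, as a set. -/
def gwaPr {A : Type*} [Ring A] (α : A ≃+* A) (u : A) (m r : ℕ) : Set A :=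
  listProdSet (((List.range m).filter (· ≠ r)).map fun i =>
    (⇑α.symm)^[i] '' gwaMset α u m)

/-- The right ideal `J^{(r)} = (Π(M, 0, r̂, m−1)·W + J(M))/J(M)` of `W/J(M)`, as a subset
of the quotient `Q` of `W` by `J(M)` (realized by the surjection `π`). -/
def gwaJr {A W Q : Type*} [Ring A] [Ring W] [Ring Q] (α : A ≃+* A) (u : A)
    (ι : A →+* W) (X Y : W) (π : W →+* Q) (m r : ℕ) : Set Q :=
  π '' {w : W | ∃ a ∈ {w' : W | ∃ (k : ℕ) (p : Fin k → A) (v : Fin k → W),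
      (∀ i, p i ∈ gwaPr α u m r) ∧ w' = ∑ i, ι (p i) * v i},
    ∃ b ∈ gwaJM α u ι X Y m, w = a + b}

/-! ### Twisted quotient maps and the components of `J(M)` -/

section

variable {A W Q A₂ : Type*} [Ring A] [Ring W] [Ring Q] [Ring A₂]

/-- The homomorphism `a ↦ πA (α^ℓ a)`, for an integer `ℓ`; its kernel is `α^{-ℓ}(ker πA)`. -/
def twistedQuot (α : A ≃+* A) (πA : A →+* A₂) (ℓ : ℤ) : A →+* A₂ :=
  πA.comp (((α : RingAut A) ^ ℓ : RingAut A) : A →+* A)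

theorem twistedQuot_apply (α : A ≃+* A) (πA : A →+* A₂) (ℓ : ℤ) (a : A) :
    twistedQuot α πA ℓ a = πA (((α : RingAut A) ^ ℓ : RingAut A) a) := rfl

theorem twistedQuot_zpow (α : A ≃+* A) (πA : A →+* A₂) (ℓ k : ℤ) (a : A) :
    twistedQuot α πA ℓ (((α : RingAut A) ^ k : RingAut A) a) = twistedQuot α πA (ℓ + k) a := by
  rw [twistedQuot_apply, twistedQuot_apply, zpow_add]; rfl

theorem twistedQuot_map (α : A ≃+* A) (πA : A →+* A₂) (ℓ : ℤ) (a : A) :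
    twistedQuot α πA ℓ (α a) = twistedQuot α πA (ℓ + 1) a := by
  have := twistedQuot_zpow α πA ℓ 1 a
  rwa [zpow_one] at this

theorem twistedQuot_symm (α : A ≃+* A) (πA : A →+* A₂) (ℓ : ℤ) (a : A) :
    twistedQuot α πA ℓ (α.symm a) = twistedQuot α πA (ℓ - 1) a := by
  have := twistedQuot_map α πA (ℓ - 1) (α.symm a)
  rw [RingEquiv.apply_symm_apply, sub_add_cancel] at this
  exact this.symm

theorem twistedQuot_surjective (α : A ≃+* A) {πA : A →+* A₂} (h : Function.Surjective πA)
    (ℓ : ℤ) : Function.Surjective (twistedQuot α πA ℓ) := by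
  intro b
  obtain ⟨a, rfl⟩ := h b
  refine ⟨((α : RingAut A) ^ (-ℓ) : RingAut A) a, ?_⟩
  rw [twistedQuot_zpow, add_neg_cancel, twistedQuot_apply, zpow_zero]; rfl

theorem iterate_eq_zpow (α : A ≃+* A) (n : ℕ) (a : A) :
    (⇑α)^[n] a = ((α : RingAut A) ^ (n : ℤ) : RingAut A) a := by
  induction n generalizing a with
  | zero => rfl
  | succ n ih =>
    rw [Function.iterate_succ_apply, ih, Nat.cast_succ, zpow_add_one]; rfl

theorem mem_image_symm_iff (α : A ≃+* A) (πA : A →+* A₂) (I : Set A)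
    (hI : ∀ a : A, πA a = 0 ↔ a ∈ I) (n : ℕ) (a : A) :
    a ∈ (⇑α.symm)^[n] '' I ↔ twistedQuot α πA n a = 0 := by
  rw [twistedQuot_apply, hI, ← iterate_eq_zpow]
  have h1 : Function.LeftInverse (⇑α)^[n] (⇑α.symm)^[n] :=
    Function.LeftInverse.iterate α.apply_symm_apply n
  have h2 : Function.LeftInverse (⇑α.symm)^[n] (⇑α)^[n] :=
    Function.LeftInverse.iterate α.symm_apply_apply n
  constructor
  · rintro ⟨b, hb, rfl⟩
    rwa [h1 b]
  · intro h
    exact ⟨_, h, h2 a⟩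

/-- A description of the components of `J(M)` that is uniform in the sign of the degree. -/
theorem mem_Jcomp_iff (α : A ≃+* A) (πA : A →+* A₂) (I : Set A)
    (hI : ∀ a : A, πA a = 0 ↔ a ∈ I) (m : ℕ) (d : ℤ) (a : A) :
    a ∈ Jcomp α I m d ↔
      ∀ ℓ : ℤ, 0 ≤ ℓ → ℓ < m → 0 ≤ ℓ + d → ℓ + d < m → twistedQuot α πA ℓ a = 0 := by
  unfold Jcomp
  split_ifs with h1 h2
  · simp only [Set.mem_univ, true_iff]
    intro ℓ _ _ _ _
    omega
  · simp only [Set.mem_iInter, mem_image_symm_iff α πA I hI, Finset.mem_range]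
    constructor
    · intro h ℓ h3 h4 h5 h6
      lift ℓ to ℕ using h3
      exact h ℓ (by omega)
    · intro h n hn
      exact h n (by omega) (by omega) (by omega) (by omega)
  · simp only [Set.mem_iInter, mem_image_symm_iff α πA I hI, Finset.mem_Icc]
    constructor
    · intro h ℓ h3 h4 h5 h6
      lift ℓ to ℕ using h3
      exact h ℓ (by omega)
    · intro h n hn
      exact h n (by omega) (by omega) (by omega) (by omega)

/-! ### Homogeneous elements of `W` and their images in `W/J(M)` -/

theorem gwaMon_mul {α : A ≃+* A} {u : A} {ι : A →+* W} {X Y : W} (hW : IsGWA α u ι X Y)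
    (k : ℤ) (a : A) :
    gwaMon X Y k * ι a = ι (((α : RingAut A) ^ k : RingAut A) a) * gwaMon X Y k := by
  have hY : ∀ (n : ℕ) (a : A),
      Y ^ n * ι a = ι (((α : RingAut A) ^ (n : ℤ) : RingAut A) a) * Y ^ n := by
    intro n
    induction n with
    | zero => intro a; simp
    | succ n ih =>
      intro a
      rw [pow_succ, mul_assoc, hW.Ya, ← mul_assoc, ih, mul_assoc, Nat.cast_succ, zpow_add_one]
      rfl
  have hX : ∀ (n : ℕ) (a : A),
      X ^ n * ι a = ι (((α : RingAut A) ^ (-n : ℤ) : RingAut A) a) * X ^ n := by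
    intro n
    induction n with
    | zero => intro a; simp
    | succ n ih =>
      intro a
      rw [pow_succ, mul_assoc, hW.Xa, ← mul_assoc, ih, mul_assoc, Nat.cast_succ, neg_add,
        zpow_add, zpow_neg_one]
      rfl
  unfold gwaMon
  split_ifs with h
  · rw [hY, Int.toNat_of_nonneg h]
  · rw [hX, Int.toNat_of_nonneg (by omega), neg_neg]

/-- A homogeneous element dies in `W/J(M)` exactly when its coefficient is in the
corresponding component of `J(M)`. -/
theorem map_homogeneous_eq_zero_iff {α : A ≃+* A} {u : A} {ι : A →+* W} {X Y : W}
    (hW : IsGWA α u ι X Y) {m : ℕ} {πA : A →+* A₂}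
    (hπAker : ∀ a : A, πA a = 0 ↔ a ∈ gwaMset α u m) {π : W →+* Q}
    (hπker : ∀ w : W, π w = 0 ↔ w ∈ gwaJM α u ι X Y m) (k : ℤ) (a : A) :
    π (ι a * gwaMon X Y k) = 0 ↔
      ∀ ℓ : ℤ, 0 ≤ ℓ → ℓ < m → 0 ≤ ℓ + k → ℓ + k < m → twistedQuot α πA ℓ a = 0 := by
  have hs : ι a * gwaMon X Y k =
      (Finsupp.single k a).sum fun i b => ι b * gwaMon X Y i := by
    rw [Finsupp.sum_single_index]; simp
  rw [hπker, ← mem_Jcomp_iff α πA _ hπAker]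
  constructor
  · rintro ⟨f, hf, hfe⟩
    have : Finsupp.single k a = f := hW.free.1 (hs.symm.trans hfe)
    have h := hf k
    rwa [← this, Finsupp.single_eq_same] at h
  · intro h
    refine ⟨Finsupp.single k a, fun d => ?_, hs⟩
    rcases eq_or_ne d k with rfl | hd
    · rwa [Finsupp.single_eq_same]
    · rw [Finsupp.single_eq_of_ne hd, mem_Jcomp_iff α πA _ hπAker]
      intros; exact map_zero _

theorem map_degree_zero_eq_zero_iff {α : A ≃+* A} {u : A} {ι : A →+* W} {X Y : W}
    (hW : IsGWA α u ι X Y) {m : ℕ} {πA : A →+* A₂}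
    (hπAker : ∀ a : A, πA a = 0 ↔ a ∈ gwaMset α u m) {π : W →+* Q}
    (hπker : ∀ w : W, π w = 0 ↔ w ∈ gwaJM α u ι X Y m) (a : A) :
    π (ι a) = 0 ↔ ∀ ℓ : ℤ, 0 ≤ ℓ → ℓ < m → twistedQuot α πA ℓ a = 0 := by
  have h := map_homogeneous_eq_zero_iff hW hπAker hπker 0 a
  have h0 : gwaMon X Y 0 = 1 := by simp [gwaMon]
  rw [h0, mul_one] at h
  rw [h]
  constructor
  · intro h ℓ h1 h2
    exact h ℓ h1 h2 (by omega) (by omega)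
  · intro h ℓ h1 h2 _ _
    exact h ℓ h1 h2

/-! ### Chinese remainders and products of monomials -/

/-- The Chinese remainder theorem for the ideals `α^{-ℓ}(M)`, `0 ≤ ℓ < m`. -/
theorem exists_crt_idem (α : A ≃+* A) (u : A) (m : ℕ)
    (h1 : ∀ i : ℕ, 1 ≤ i → i ≠ m → ∀ a : A, ∃ b c : A, a = b * u + c * (⇑α)^[i] u)
    (πA : A →+* A₂) (hu : πA u = 0) (r : ℤ) (hr : 0 ≤ r) (hrm : r < m) :
    ∃ e : A, twistedQuot α πA r e = 1 ∧
      ∀ ℓ : ℤ, 0 ≤ ℓ → ℓ < m → ℓ ≠ r → twistedQuot α πA ℓ e = 0 := by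
  -- An element separating a smaller index `i` from a larger index `j`.
  have key : ∀ i j : ℤ, 0 ≤ i → i < j → j < m →
      ∃ x : A, twistedQuot α πA i x = 1 ∧ twistedQuot α πA j x = 0 := by
    intro i j hi hij hj
    obtain ⟨b, c, hbc⟩ := h1 (j - i).toNat (by omega) (by omega) 1
    rw [iterate_eq_zpow, Int.toNat_of_nonneg (by omega)] at hbc
    have hz : ∀ a : A, twistedQuot α πA 0 a = πA a := fun a => by
      rw [twistedQuot_apply, zpow_zero]; rfl
    refine ⟨((α : RingAut A) ^ (-j) : RingAut A) (b * u), ?_, ?_⟩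
    · have h2 : twistedQuot α πA (i + -j)
          (c * ((α : RingAut A) ^ (j - i) : RingAut A) u) = 0 := by
        rw [map_mul, twistedQuot_zpow, show i + -j + (j - i) = 0 by ring, hz, hu, mul_zero]
      rw [twistedQuot_zpow, ← map_one (twistedQuot α πA (i + -j)), hbc, map_add, h2, add_zero]
    · rw [twistedQuot_zpow, add_neg_cancel, hz, map_mul, hu, mul_zero]
  have key2 : ∀ s : ℤ, 0 ≤ s → s < m → s ≠ r →
      ∃ x : A, twistedQuot α πA r x = 1 ∧ twistedQuot α πA s x = 0 := by
    intro s hs hsm hsr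
    rcases lt_or_gt_of_ne hsr with h | h
    · obtain ⟨x, hx1, hx2⟩ := key s r hs h hrm
      exact ⟨1 - x, by simp [hx2], by simp [hx1]⟩
    · exact key r s hr h hsm
  have key3 : ∀ T : Finset ℤ, (∀ s ∈ T, 0 ≤ s ∧ s < m ∧ s ≠ r) →
      ∃ x : A, twistedQuot α πA r x = 1 ∧ ∀ s ∈ T, twistedQuot α πA s x = 0 := by
    intro T
    induction T using Finset.induction_on with
    | empty => intro _; exact ⟨1, map_one _, by simp⟩
    | insert s T _ ih =>
      intro hT
      obtain ⟨x, hx1, hx2⟩ := ih fun t ht => hT t (Finset.mem_insert_of_mem ht)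
      obtain ⟨hs0, hs1, hs2⟩ := hT s (Finset.mem_insert_self s T)
      obtain ⟨y, hy1, hy2⟩ := key2 s hs0 hs1 hs2
      refine ⟨x * y, by simp [hx1, hy1], fun t ht => ?_⟩
      rcases Finset.mem_insert.1 ht with rfl | ht
      · simp [hy2]
      · simp [hx2 t ht]
  obtain ⟨x, hx1, hx2⟩ := key3 ((Finset.Ico (0 : ℤ) m).erase r) (by
    intro s hs
    simp only [Finset.mem_erase, Finset.mem_Ico] at hs
    exact ⟨hs.2.1, hs.2.2, hs.1⟩)
  refine ⟨x, hx1, fun ℓ h2 h3 h4 => hx2 ℓ ?_⟩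
  simp only [Finset.mem_erase, Finset.mem_Ico]
  exact ⟨h4, h2, h3⟩

theorem twistedQuot_u_ne_zero [Nontrivial A₂] {α : A ≃+* A} {u : A} {m : ℕ}
    (h1 : ∀ i : ℕ, 1 ≤ i → i ≠ m → ∀ a : A, ∃ b c : A, a = b * u + c * (⇑α)^[i] u)
    {πA : A →+* A₂} (hu : πA u = 0) (j : ℤ) (hj : 1 ≤ j) (hjm : j < m) :
    twistedQuot α πA j u ≠ 0 := by
  intro h
  obtain ⟨b, c, hbc⟩ := h1 j.toNat (by omega) (by omega) 1
  rw [iterate_eq_zpow, Int.toNat_of_nonneg (by omega)] at hbc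
  have h2 := congrArg πA hbc
  rw [map_one, map_add, map_mul, map_mul, hu, ← twistedQuot_apply, h] at h2
  simp at h2

/-- The product of the monomials of degrees `d` and `-d` is an element of `A` which lies outside
`α^{-r}(M)` as soon as `r` and `r + d` both lie in `[0, m)`. -/
theorem exists_gwaMon_mul_neg [Nontrivial A₂] {α : A ≃+* A} {u : A} {ι : A →+* W} {X Y : W}
    (hW : IsGWA α u ι X Y) {m : ℕ}
    (h1 : ∀ i : ℕ, 1 ≤ i → i ≠ m → ∀ a : A, ∃ b c : A, a = b * u + c * (⇑α)^[i] u)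
    {πA : A →+* A₂} (hu : πA u = 0) (hdom : ∀ a b : A₂, a * b = 0 → a = 0 ∨ b = 0) (d : ℤ) :
    ∃ c : A, gwaMon X Y d * gwaMon X Y (-d) = ι c ∧
      ∀ r : ℤ, 0 ≤ r → r < m → 0 ≤ r + d → r + d < m → twistedQuot α πA r c ≠ 0 := by
  have hY : ∀ n : ℕ, ∃ c : A, Y ^ n * X ^ n = ι c ∧
      ∀ r : ℤ, 0 ≤ r → r + n < m → twistedQuot α πA r c ≠ 0 := by
    intro n
    induction n with
    | zero => exact ⟨1, by simp, fun r _ _ => by simp⟩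
    | succ n ih =>
      obtain ⟨c, hc, hc'⟩ := ih
      refine ⟨α c * α u, ?_, fun r h2 h3 h4 => ?_⟩
      · rw [pow_succ' Y, pow_succ X, map_mul, ← hW.YX, ← mul_assoc (ι (α c)), ← hW.Ya, ← hc]
        noncomm_ring
      · push_cast at h3
        rw [map_mul, twistedQuot_map, twistedQuot_map] at h4
        rcases hdom _ _ h4 with h4 | h4
        · exact hc' _ (by omega) (by omega) h4
        · exact twistedQuot_u_ne_zero h1 hu _ (by omega) (by omega) h4
  have hX : ∀ n : ℕ, ∃ c : A, X ^ n * Y ^ n = ι c ∧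
      ∀ r : ℤ, n ≤ r → r < m → twistedQuot α πA r c ≠ 0 := by
    intro n
    induction n with
    | zero => exact ⟨1, by simp, fun r _ _ => by simp⟩
    | succ n ih =>
      obtain ⟨c, hc, hc'⟩ := ih
      refine ⟨α.symm c * u, ?_, fun r h2 h3 h4 => ?_⟩
      · rw [pow_succ' X, pow_succ Y, map_mul, ← hW.XY, ← mul_assoc (ι (α.symm c)), ← hW.Xa, ← hc]
        noncomm_ring
      · push_cast at h2
        rw [map_mul, twistedQuot_symm] at h4
        rcases hdom _ _ h4 with h4 | h4
        · exact hc' _ (by omega) (by omega) h4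
        · exact twistedQuot_u_ne_zero h1 hu _ (by omega) (by omega) h4
  rcases lt_trichotomy d 0 with hd | rfl | hd
  · obtain ⟨c, hc, hc'⟩ := hX (-d).toNat
    refine ⟨c, ?_, fun r _ h3 h4 _ => hc' r (by omega) h3⟩
    rw [← hc, gwaMon, gwaMon, if_neg (by omega), if_pos (by omega)]
  · exact ⟨1, by simp [gwaMon], fun r _ _ _ _ => by simp⟩
  · obtain ⟨c, hc, hc'⟩ := hY d.toNat
    refine ⟨c, ?_, fun r h2 _ _ h5 => hc' r h2 (by omega)⟩
    rw [← hc, gwaMon, gwaMon, if_pos (by omega), if_neg (by omega), neg_neg]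

/-! ### Reduction to degree zero -/

/-- If `e` lies in `α^{-ℓ}(M)` for all `ℓ ≠ r` in `[0, m)`, then every nonzero element of the right
ideal of `W/J(M)` generated by `e` has a right multiple that is the image of some `e y` with
`y ∈ A` outside `α^{-r}(M)`. -/
theorem exists_degree_zero_multiple [Nontrivial A₂] {α : A ≃+* A} {u : A} {ι : A →+* W} {X Y : W}
    (hW : IsGWA α u ι X Y) {m : ℕ}
    (h1 : ∀ i : ℕ, 1 ≤ i → i ≠ m → ∀ a : A, ∃ b c : A, a = b * u + c * (⇑α)^[i] u)
    {πA : A →+* A₂} (hu : πA u = 0) (hdom : ∀ a b : A₂, a * b = 0 → a = 0 ∨ b = 0)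
    (hπAker : ∀ a : A, πA a = 0 ↔ a ∈ gwaMset α u m) {π : W →+* Q}
    (hπsurj : Function.Surjective π)
    (hπker : ∀ w : W, π w = 0 ↔ w ∈ gwaJM α u ι X Y m)
    {r : ℤ} {e : A} (he : ∀ ℓ : ℤ, 0 ≤ ℓ → ℓ < m → ℓ ≠ r → twistedQuot α πA ℓ e = 0)
    (q : Q) (hq : π (ι e) * q ≠ 0) :
    ∃ (t : Q) (y : A), π (ι e) * q * t = π (ι (e * y)) ∧ twistedQuot α πA r y ≠ 0 := by
  obtain ⟨w, rfl⟩ := hπsurj q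
  obtain ⟨f, rfl⟩ := hW.free.2 w
  have hsum : π (ι e) * π (f.sum fun i a => ι a * gwaMon X Y i) =
      ∑ d ∈ f.support, π (ι (e * f d) * gwaMon X Y d) := by
    rw [Finsupp.sum, ← map_mul, Finset.mul_sum, map_sum]
    simp only [map_mul, mul_assoc]
  -- `d` is a degree in which the given element does not vanish.
  obtain ⟨d, hd, hdne⟩ : ∃ d ∈ f.support, π (ι (e * f d) * gwaMon X Y d) ≠ 0 := by
    apply Finset.exists_ne_zero_of_sum_ne_zero
    rwa [← hsum]
  rw [Ne, map_homogeneous_eq_zero_iff hW hπAker hπker] at hdne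
  push Not at hdne
  obtain ⟨ℓ, hℓ0, hℓm, hℓd0, hℓdm, hℓ⟩ := hdne
  obtain rfl : ℓ = r := by
    by_contra hne
    exact hℓ (by rw [map_mul, he ℓ hℓ0 hℓm hne, zero_mul])
  obtain ⟨e', he'1, he'0⟩ := exists_crt_idem α u m h1 πA hu (ℓ + d) hℓd0 hℓdm
  obtain ⟨c, hc, hc'⟩ := exists_gwaMon_mul_neg hW h1 hu hdom d
  refine ⟨π (ι e') * π (gwaMon X Y (-d)), f d * ((α : RingAut A) ^ d : RingAut A) e' * c, ?_, ?_⟩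
  · rw [hsum, ← mul_assoc, Finset.sum_mul, Finset.sum_eq_single d]
    · rw [← map_mul, ← map_mul, mul_assoc (ι (e * f d)), gwaMon_mul hW, mul_assoc, mul_assoc, hc]
      simp only [map_mul, mul_assoc]
    · intro d' _ hne
      rw [← map_mul, mul_assoc, gwaMon_mul hW, ← mul_assoc, ← map_mul,
        map_homogeneous_eq_zero_iff hW hπAker hπker]
      intro k hk0 hkm hkd0 hkdm
      rcases eq_or_ne k ℓ with rfl | hkne
      · rw [map_mul, twistedQuot_zpow, he'0 _ hkd0 hkdm (by omega), mul_zero]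
      · rw [map_mul, map_mul, he k hk0 hkm hkne, zero_mul, zero_mul]
    · intro h; exact absurd hd h
  · intro h0
    rw [map_mul, map_mul, twistedQuot_zpow, he'1, mul_one] at h0
    rcases hdom _ _ h0 with h0 | h0
    · exact hℓ (by rw [map_mul, h0, mul_zero])
    · exact hc' ℓ hℓ0 hℓm hℓd0 hℓdm h0

end

/-! ### The decomposition into uniform right ideals -/

/-- Proposition 4.8: the ring `W/J(M)` has right Goldie rank `m`: it is the internal
direct sum of `m` uniform right ideals. -/
theorem stmt18 {A W Q A₂ : Type*} [Ring A] [Ring W] [Ring Q] [Ring A₂]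
    (α : A ≃+* A) (u : A) (ι : A →+* W) (X Y : W) (hW : IsGWA α u ι X Y)
    (hureg : (∀ a : A, u * a = 0 → a = 0) ∧ (∀ a : A, a * u = 0 → a = 0))
    (m : ℕ) (hm : 1 ≤ m)
    -- `Au + Aαⁱ(u) = A` for all positive integers `i ≠ m`
    (h1 : ∀ i : ℕ, 1 ≤ i → i ≠ m → ∀ a : A, ∃ b c : A, a = b * u + c * (⇑α)^[i] u)
    -- `A/M` is a simple right Ore domain, where `M = Au + Aα^m(u)`
    (πA : A →+* A₂) (hπAsurj : Function.Surjective πA)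
    (hπAker : ∀ a : A, πA a = 0 ↔ a ∈ gwaMset α u m)
    (hA₂simple : IsSimpleRing A₂)
    (hA₂domain : ∀ a b : A₂, a * b = 0 → a = 0 ∨ b = 0)
    (hA₂ore : ∀ a b : A₂, a ≠ 0 → b ≠ 0 → ∃ c d : A₂, a * c = b * d ∧ a * c ≠ 0)
    -- `Q = W/J(M)` via the surjection `π` with kernel `J(M)`
    (π : W →+* Q) (hπsurj : Function.Surjective π)
    (hπker : ∀ w : W, π w = 0 ↔ w ∈ gwaJM α u ι X Y m) :
    ∃ S : Fin m → Set Q,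
      (∀ r : Fin m, IsRightIdealSet (S r) ∧ IsUniformRightIdealSet (S r)) ∧
      (∀ q : Q, ∃ cf : Fin m → Q, (∀ r : Fin m, cf r ∈ S r) ∧ q = ∑ r, cf r) ∧
      (∀ cf : Fin m → Q, (∀ r : Fin m, cf r ∈ S r) → ∑ r, cf r = 0 →
        ∀ r : Fin m, cf r = 0) := by
  have hu : πA u = 0 := (hπAker u).2 ⟨1, 0, by simp⟩
  have hz := map_degree_zero_eq_zero_iff hW hπAker hπker
  choose e he1 he0 using fun r : Fin m =>
    exists_crt_idem α u m h1 πA hu (r : ℕ) (by omega) (by exact_mod_cast r.2)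
  have hsum1 : ∑ r, π (ι (e r)) = 1 := by
    rw [← map_sum, ← map_sum, ← sub_eq_zero, ← map_one π, ← map_one ι, ← map_sub, ← map_sub, hz]
    intro ℓ h2 h3
    lift ℓ to ℕ using h2
    rw [map_sub, map_sum, map_one, sub_eq_zero,
      Finset.sum_eq_single (⟨ℓ, by exact_mod_cast h3⟩ : Fin m)]
    · exact he1 ⟨ℓ, by exact_mod_cast h3⟩
    · intro s _ hs
      refine he0 s ℓ (by omega) h3 fun h => hs (Fin.ext ?_)
      exact_mod_cast h.symm
    · simp
  have horth : ∀ r s : Fin m, r ≠ s → π (ι (e r)) * π (ι (e s)) = 0 := by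
    intro r s hrs
    rw [← map_mul, ← map_mul, hz]
    intro ℓ h2 h3
    rw [map_mul]
    rcases eq_or_ne ℓ ((r : ℕ) : ℤ) with rfl | h
    · rw [he0 s _ h2 h3 (fun h => hrs (Fin.ext (by exact_mod_cast h))), mul_zero]
    · rw [he0 r ℓ h2 h3 h, zero_mul]
  have hidem : ∀ r : Fin m, π (ι (e r)) * π (ι (e r)) = π (ι (e r)) := by
    intro r
    have h := congrArg (π (ι (e r)) * ·) hsum1
    simp only [Finset.mul_sum, mul_one] at h
    rwa [Finset.sum_eq_single r (fun s _ hs => horth r s hs.symm) (by simp)] at h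
  refine ⟨fun r => {x | ∃ q, x = π (ι (e r)) * q}, fun r => ⟨⟨?_, ?_, ?_, ?_⟩, ?_, ?_⟩, ?_, ?_⟩
  · exact ⟨0, by simp⟩
  · rintro _ ⟨q, rfl⟩ _ ⟨q', rfl⟩
    exact ⟨q + q', by rw [mul_add]⟩
  · rintro _ ⟨q, rfl⟩
    exact ⟨-q, by rw [mul_neg]⟩
  · rintro _ ⟨q, rfl⟩ q'
    exact ⟨q * q', by rw [mul_assoc]⟩
  · refine ⟨π (ι (e r)), ⟨1, by simp⟩, fun h => ?_⟩
    have := (hz _).1 h (r : ℕ) (by omega) (by exact_mod_cast r.2)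
    rw [he1 r] at this
    exact one_ne_zero this
  · rintro _ ⟨q, rfl⟩ hq _ ⟨q', rfl⟩ hq'
    obtain ⟨t, y, hty, hy⟩ := exists_degree_zero_multiple hW h1 hu hA₂domain hπAker hπsurj hπker
      (he0 r) q hq
    obtain ⟨t', y', hty', hy'⟩ := exists_degree_zero_multiple hW h1 hu hA₂domain hπAker hπsurj
      hπker (he0 r) q' hq'
    obtain ⟨c, c', hcc, hc⟩ := hA₂ore _ _ hy hy'
    obtain ⟨z, rfl⟩ := twistedQuot_surjective α hπAsurj (r : ℕ) c
    obtain ⟨z', rfl⟩ := twistedQuot_surjective α hπAsurj (r : ℕ) c'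
    refine ⟨t * π (ι z), t' * π (ι z'), ?_, ?_⟩
    · rw [← mul_assoc, ← mul_assoc, hty, hty', ← map_mul, ← map_mul, ← map_mul, ← map_mul,
        ← sub_eq_zero, ← map_sub, ← map_sub, hz]
      intro ℓ h2 h3
      rcases eq_or_ne ℓ ((r : ℕ) : ℤ) with rfl | h
      · simp only [map_sub, map_mul, mul_assoc, hcc, sub_self]
      · simp only [map_sub, map_mul, he0 r ℓ h2 h3 h, zero_mul, sub_self]
    · rw [← mul_assoc, hty, ← map_mul, ← map_mul]
      intro h
      have := (hz _).1 h (r : ℕ) (by omega) (by exact_mod_cast r.2)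
      rw [map_mul, map_mul, he1 r, one_mul] at this
      exact hc this
  · intro q
    exact ⟨fun r => π (ι (e r)) * q, fun r => ⟨q, rfl⟩, by rw [← Finset.sum_mul, hsum1, one_mul]⟩
  · intro cf hcf h0 r
    -- Left multiplication by `E_r` is the projection onto the `r`-th summand.
    have h := congrArg (π (ι (e r)) * ·) h0
    simp only [Finset.mul_sum, mul_zero] at h
    rw [Finset.sum_eq_single r ?_ (by simp)] at h
    · obtain ⟨q, hq⟩ := hcf r
      rwa [hq, ← mul_assoc, hidem, ← hq] at h
    · intro s _ hs
      obtain ⟨q, hq⟩ := hcf s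
      rw [hq, ← mul_assoc, horth r s hs.symm, zero_mul]
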